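/- arXiv:1005.2048 — 2 statements merged into one kernel-verified Lean document; each statement's English description precedes it below -/
import Mathlib

section
/- Let E be a finite-dimensional complex vector space and f a function holomorphic on the complement U of finitely many hyperplanes in a neighborhood of 0 in E, with values in a finite-dimensional complex vector space. Suppose f is bounded on U and there exists a finite family of affine functions (l_i) on E such that the product of f with the product of the l_i extends holomorphically to a neighborhood of 0. Then f itself extends holomorphically to a neighborhood of 0 in E. -/
section RemovableAux

open MeasureTheory Filter Topology Set
open scoped NNReal ENNReal

lemma param_local {E F : Type*} [NormedAddCommGroup E] [NormedSpace ℂ E]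
    [NormedAddCommGroup F] [NormedSpace ℂ F] [CompleteSpace F] {f : E → F} {c : E}
    (hf : AnalyticAt ℂ f c) :
    ∃ δ > 0, ∀ (μ : Measure ℝ) [IsFiniteMeasure μ] (γ : ℝ → E) (_ : Continuous γ) (B : Set ℝ)
      (_ : MeasurableSet B) (_ : ∀ θ ∈ B, γ θ ∈ Metric.ball c δ),
      (∀ᶠ x in 𝓝 (0 : E), IntegrableOn (fun θ => f (x + γ θ)) B μ) ∧
      AnalyticAt ℂ (fun x => ∫ θ in B, f (x + γ θ) ∂μ) 0 := by
  obtain ⟨p, R, hp⟩ := hf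
  obtain ⟨s, hs0, hsR⟩ : ∃ s : ℝ≥0, 0 < s ∧ (s + s : ℝ≥0∞) < R := by
    obtain ⟨t, ht0, htR⟩ := ENNReal.lt_iff_exists_nnreal_btwn.1 hp.r_pos
    refine ⟨t / 2, by simpa using ht0, ?_⟩
    rw [← ENNReal.coe_add, add_halves]; exact htR
  have hsp : (s + s : ℝ≥0∞) < p.radius := hsR.trans_le hp.r_le
  have hs1 : (s : ℝ≥0∞) < R := lt_of_le_of_lt le_self_add hsR
  have hs2 : (s : ℝ≥0∞) < p.radius := hs1.trans_le hp.r_le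
  obtain ⟨b, hb, hbs⟩ : ∃ b : ℕ → ℝ≥0, (∀ w : E, ‖w‖₊ ≤ s → ∀ k, ‖p.changeOrigin w k‖₊ ≤ b k) ∧
      Summable (fun k => b k * s ^ k) := by
    refine ⟨fun k => ∑' t : Σ l : ℕ, { t : Finset (Fin (k + l)) // t.card = l },
      ‖p (k + t.1)‖₊ * s ^ t.1, ?_, ?_⟩
    · intro w hw k
      have hw' : (‖w‖₊ : ℝ≥0∞) < p.radius := lt_of_le_of_lt (by exact_mod_cast hw) hs2
      refine (p.nnnorm_changeOrigin_le k hw').trans ?_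
      refine Summable.tsum_le_tsum (fun t => ?_) (p.changeOriginSeries_summable_aux₂ hw' k)
        (p.changeOriginSeries_summable_aux₂ hs2 k)
      gcongr
    · simpa only [← NNReal.tsum_mul_right] using
        (NNReal.summable_sigma.1 (p.changeOriginSeries_summable_aux₁ hsp)).2
  refine ⟨s, hs0, ?_⟩
  intro μ _ γ hγ B hB hBs
  have hw : ∀ θ ∈ B, ‖γ θ - c‖₊ ≤ s := fun θ hθ => by
    have := hBs θ hθ
    rw [mem_ball_iff_norm] at this
    exact_mod_cast this.le
  have hwR : ∀ θ ∈ B, (‖γ θ - c‖₊ : ℝ≥0∞) < R := fun θ hθ =>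
    lt_of_le_of_lt (by exact_mod_cast hw θ hθ) hs1
  have hsum : ∀ y ∈ Metric.eball (0 : E) s, ∀ θ ∈ B,
      HasSum (fun n => p.changeOrigin (γ θ - c) n fun _ => y) (f (y + γ θ)) := by
    intro y hy θ hθ
    have h1 := hp.changeOrigin (hwR θ hθ)
    have h2 := h1.hasSum (y := y) (by
      rw [mem_eball_zero_iff] at hy ⊢
      rw [lt_tsub_iff_right]
      refine lt_of_le_of_lt ?_ hsR
      gcongr
      exact_mod_cast hw θ hθ)
    convert h2 using 2
    abel
  have hbd : ∀ y ∈ Metric.eball (0 : E) s, ∀ θ ∈ B, ∀ n,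
      ‖p.changeOrigin (γ θ - c) n fun _ => y‖ ≤ ((b n * s ^ n : ℝ≥0) : ℝ) := by
    intro y hy θ hθ n
    have hy' : ‖y‖₊ ≤ s := by
      rw [mem_eball_zero_iff] at hy
      exact_mod_cast hy.le
    refine ((p.changeOrigin (γ θ - c) n).le_opNorm _).trans ?_
    simp only [Finset.prod_const, Finset.card_univ, Fintype.card_fin]
    push_cast
    gcongr
    · exact_mod_cast hb _ (hw θ hθ) n
    · exact_mod_cast hy'
  have hqm : ∀ n, AEStronglyMeasurable (fun θ => p.changeOrigin (γ θ - c) n) (μ.restrict B) := by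
    intro n
    refine ContinuousOn.aestronglyMeasurable ?_ hB
    have h1 := (p.hasFPowerSeriesOnBall_changeOrigin n (hp.r_pos.trans_le hp.r_le)).continuousOn
    refine h1.comp (by fun_prop) ?_
    intro θ hθ
    rw [mem_eball_zero_iff]
    exact (hwR θ hθ).trans_le hp.r_le
  have hqi : ∀ n, Integrable (fun θ => p.changeOrigin (γ θ - c) n) (μ.restrict B) := by
    intro n
    refine Integrable.of_bound (hqm n) (b n) ?_
    filter_upwards [ae_restrict_mem hB] with θ hθ
    exact_mod_cast hb _ (hw θ hθ) n
  have hbs' : Summable fun n => ((b n * s ^ n : ℝ≥0) : ℝ) := NNReal.summable_coe.2 hbs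
  constructor
  · filter_upwards [Metric.eball_mem_nhds (0 : E) (ε := s) (by simpa using hs0)] with y hy
    refine Integrable.of_bound (C := ∑' n, ((b n * s ^ n : ℝ≥0) : ℝ)) ?_ ?_
    · refine ContinuousOn.aestronglyMeasurable ?_ hB
      refine hp.continuousOn.comp (by fun_prop) ?_
      intro θ hθ
      rw [Metric.mem_eball, edist_eq_enorm_sub, add_sub_assoc]
      rw [mem_eball_zero_iff] at hy
      refine (enorm_add_le _ _).trans_lt (lt_of_le_of_lt ?_ hsR)
      have := hw θ hθ
      gcongr
      exact_mod_cast this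
    · filter_upwards [ae_restrict_mem hB] with θ hθ
      rw [← (hsum y hy θ hθ).tsum_eq]
      exact tsum_of_norm_bounded hbs'.hasSum (hbd y hy θ hθ)
  · refine ⟨fun n => ∫ θ in B, p.changeOrigin (γ θ - c) n ∂μ, s, ?_, by simpa using hs0, ?_⟩
    · refine FormalMultilinearSeries.le_radius_of_summable_norm _ ?_
      refine Summable.of_nonneg_of_le (fun n => by positivity) (fun n => ?_)
        (hbs'.mul_left (μ.real B))
      have : ‖∫ θ in B, p.changeOrigin (γ θ - c) n ∂μ‖ ≤ b n * μ.real B := by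
        refine norm_setIntegral_le_of_norm_le_const (measure_lt_top _ _) ?_
        intro θ hθ
        exact_mod_cast hb _ (hw θ hθ) n
      calc _ ≤ (b n * μ.real B) * (s : ℝ) ^ n := by gcongr
        _ = _ := by push_cast; ring
    · intro y hy
      rw [zero_add]
      have := hasSum_integral_of_dominated_convergence (μ := μ.restrict B)
        (F := fun n θ => p.changeOrigin (γ θ - c) n fun _ => y) (f := fun θ => f (y + γ θ))
        (fun n _ => ((b n * s ^ n : ℝ≥0) : ℝ))
        (fun n => ((ContinuousMultilinearMap.apply ℂ (fun _ : Fin n => E) F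
          (fun _ => y)).continuous.comp_aestronglyMeasurable (hqm n)))
        (fun n => by
          filter_upwards [ae_restrict_mem hB] with θ hθ
          exact hbd y hy θ hθ n)
        (Eventually.of_forall fun _ => hbs') (integrable_const _)
        (by
          filter_upwards [ae_restrict_mem hB] with θ hθ
          exact hsum y hy θ hθ)
      convert this using 2 with n
      exact ((ContinuousMultilinearMap.apply ℂ (fun _ : Fin n => E) F
          (fun _ => y)).integral_comp_comm (hqi n)).symm

lemma param_analytic {E F : Type*} [NormedAddCommGroup E] [NormedSpace ℂ E]
    [NormedAddCommGroup F] [NormedSpace ℂ F] [CompleteSpace F] {f : E → F}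
    (μ : Measure ℝ) [IsFiniteMeasure μ] (γ : ℝ → E) (hγ : Continuous γ) (K B : Set ℝ)
    (hK : IsCompact K) (hB : MeasurableSet B) (hBK : B ⊆ K)
    (hf : ∀ θ ∈ K, AnalyticAt ℂ f (γ θ)) :
    AnalyticAt ℂ (fun x => ∫ θ in B, f (x + γ θ) ∂μ) 0 := by
  have key : ∃ A, K ⊆ A ∧ MeasurableSet A ∧ ∀ B, MeasurableSet B → B ⊆ A →
      (∀ᶠ x in 𝓝 (0 : E), IntegrableOn (fun θ => f (x + γ θ)) B μ) ∧
      AnalyticAt ℂ (fun x => ∫ θ in B, f (x + γ θ) ∂μ) 0 := by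
    refine hK.induction_on (p := fun K => ∃ A, K ⊆ A ∧ MeasurableSet A ∧ ∀ B, MeasurableSet B →
      B ⊆ A → (∀ᶠ x in 𝓝 (0 : E), IntegrableOn (fun θ => f (x + γ θ)) B μ) ∧
      AnalyticAt ℂ (fun x => ∫ θ in B, f (x + γ θ) ∂μ) 0) ?_ ?_ ?_ ?_
    · refine ⟨∅, le_rfl, MeasurableSet.empty, fun B _ hB => ?_⟩
      obtain rfl := Set.subset_empty_iff.1 hB
      simp [analyticAt_const]
    · rintro s t hst ⟨A, h1, h2⟩
      exact ⟨A, hst.trans h1, h2⟩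
    · rintro s t ⟨A, hA, hAm, h1⟩ ⟨A', hA', hAm', h2⟩
      refine ⟨A ∪ A', Set.union_subset_union hA hA', hAm.union hAm', fun B hB hBA => ?_⟩
      obtain ⟨i1, a1⟩ := h1 (B ∩ A) (hB.inter hAm) Set.inter_subset_right
      obtain ⟨i2, a2⟩ := h2 (B \ A) (hB.diff hAm) (fun x hx => (hBA hx.1).resolve_left hx.2)
      constructor
      · filter_upwards [i1, i2] with x h1 h2
        have := h1.union h2
        rwa [Set.inter_union_sdiff] at this
      · refine (a1.add a2).congr ?_
        filter_upwards [i1, i2] with x h1 h2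
        have := setIntegral_union (Set.disjoint_left.2 fun x hx hx' => hx'.2 hx.2)
          (hB.diff hAm) h1 h2
        rw [Set.inter_union_sdiff] at this
        exact this.symm
    · intro θ hθ
      obtain ⟨δ, hδ, H⟩ := param_local (hf θ hθ)
      have ho : IsOpen (γ ⁻¹' Metric.ball (γ θ) δ) := Metric.isOpen_ball.preimage hγ
      exact ⟨_, mem_nhdsWithin_of_mem_nhds (ho.mem_nhds (by simpa using hδ)), _, le_rfl,
        ho.measurableSet, fun B hB hBA => H μ γ hγ B hB hBA⟩
  obtain ⟨A, hA, -, H⟩ := key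
  exact (H B hB (hBK.trans hA)).2

lemma mean_value_removable {F : Type*} [NormedAddCommGroup F] [NormedSpace ℂ F] [CompleteSpace F]
    (w : ℂ → F) (S : Set ℂ) (hS : S.Finite) (ρ C : ℝ) (hρ : 0 < ρ)
    (hd : ∀ z ∈ Metric.closedBall (0 : ℂ) ρ, z ∉ S → DifferentiableAt ℂ w z)
    (hb : ∀ z ∈ Metric.closedBall (0 : ℂ) ρ, z ∉ S → ‖w z‖ ≤ C)
    (h0 : (0 : ℂ) ∉ S) (hs : ∀ z ∈ Metric.sphere (0 : ℂ) ρ, z ∉ S) :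
    Real.circleAverage w 0 ρ = w 0 := by
  classical
  set W : ℂ → F := fun z => if z ∈ S then limUnder (𝓝[≠] z) w else w z with hW
  have hWw : ∀ z, z ∉ S → W z = w z := fun z hz => by simp [hW, hz]
  have hWd : ∀ z ∈ Metric.closedBall (0 : ℂ) ρ, z ∉ S → DifferentiableAt ℂ W z := by
    intro z hz hzS
    refine (hd z hz hzS).congr_of_eventuallyEq ?_
    filter_upwards [hS.isClosed.isOpen_compl.mem_nhds hzS] with y hy
    exact hWw y hy
  have hWc : ∀ z ∈ Metric.closedBall (0 : ℂ) ρ, ContinuousAt W z := by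
    intro z hz
    by_cases hzS : z ∈ S
    · have hzb : z ∈ Metric.ball (0 : ℂ) ρ := by
        rw [Metric.mem_ball]
        exact lt_of_le_of_ne hz fun h => hs z h hzS
      have hgood : ∀ᶠ y in 𝓝[≠] z, y ∈ Metric.closedBall (0 : ℂ) ρ ∧ y ∉ S := by
        have h1 : ∀ᶠ y in 𝓝[≠] z, y ∈ Metric.ball (0 : ℂ) ρ :=
          mem_nhdsWithin_of_mem_nhds (Metric.isOpen_ball.mem_nhds hzb)
        have h2 : ∀ᶠ y in 𝓝[≠] z, y ∈ (S \ {z})ᶜ :=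
          mem_nhdsWithin_of_mem_nhds
            ((hS.subset Set.sdiff_subset).isClosed.isOpen_compl.mem_nhds (by simp))
        filter_upwards [h1, h2, self_mem_nhdsWithin] with y hy1 hy2 hy3
        exact ⟨Metric.ball_subset_closedBall hy1, fun h => hy2 ⟨h, hy3⟩⟩
      have ht := Complex.tendsto_limUnder_of_differentiable_on_punctured_nhds_of_bounded_under
        (f := w) (c := z) (hgood.mono fun y hy => hd y hy.1 hy.2)
        ⟨C + ‖w z‖, by
          rw [eventually_map]
          filter_upwards [hgood] with y hy
          exact norm_sub_le_of_le (hb y hy.1 hy.2) le_rfl⟩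
      rw [← continuousWithinAt_compl_self]
      have hz' : W z = limUnder (𝓝[≠] z) w := by simp [hW, hzS]
      rw [ContinuousWithinAt, hz']
      refine ht.congr' ?_
      filter_upwards [hgood] with y hy
      exact (hWw y hy.2).symm
    · exact (hWd z hz hzS).continuousAt
  have hm := circleAverage_of_differentiable_on_off_countable (f := W) (c := 0) (R := ρ)
    hS.countable
    (by rw [abs_of_pos hρ]; exact fun z hz => (hWc z hz).continuousWithinAt)
    (by
      rw [abs_of_pos hρ]
      exact fun z hz => hWd z (Metric.ball_subset_closedBall hz.1) hz.2)
  rw [hWw 0 h0] at hm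
  rw [← hm]
  refine Real.circleAverage_congr_sphere ?_
  intro z hz
  rw [abs_of_pos hρ] at hz
  exact (hWw z (hs z hz)).symm

end RemovableAux

/-- Removable singularity along finitely many hyperplanes: if `f` is holomorphic and
bounded on the complement `U` of finitely many (affine) hyperplanes in a ball around `0`,
and the product of `f` with finitely many affine functions `l i` extends holomorphically
to the ball, then `f` extends holomorphically to a neighborhood of `0`. -/
theorem stmt0 {E F : Type*} [NormedAddCommGroup E] [NormedSpace ℂ E] [FiniteDimensional ℂ E]
    [NormedAddCommGroup F] [NormedSpace ℂ F] [FiniteDimensional ℂ F]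
    {r : ℝ} (hr : 0 < r) {ι κ : Type*} [Fintype ι] [Fintype κ]
    (h : ι → (E →ᵃ[ℂ] ℂ)) (hhyp : ∀ i, h i ≠ 0)
    (l : κ → (E →ᵃ[ℂ] ℂ))
    (U : Set E) (hU : U = Metric.ball 0 r \ ⋃ i, {x | h i x = 0})
    (f : E → F) (hf : AnalyticOnNhd ℂ f U)
    (C : ℝ) (hbd : ∀ x ∈ U, ‖f x‖ ≤ C)
    (g : E → F) (hg : AnalyticOnNhd ℂ g (Metric.ball 0 r))
    (hgf : ∀ x ∈ U, g x = (∏ i, l i x) • f x) :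
    ∃ (V : Set E) (f' : E → F), V ∈ nhds (0 : E) ∧ AnalyticOnNhd ℂ f' V ∧
      Set.EqOn f f' (U ∩ V) := by
  classical
  have haff : ∀ (i : ι) (x v : E) (z : ℂ), h i (x + z • v) = h i x + z * (h i).linear v := by
    intro i x v z
    have := (h i).map_vadd x (z • v)
    simp only [vadd_eq_add, map_smul, smul_eq_mul] at this
    rw [add_comm x, this, add_comm]
  have hconst : ∀ i, (h i).linear = 0 → ∀ x, h i x ≠ 0 := by
    intro i hi x hx
    refine hhyp i ?_
    ext y
    have := haff i x (y - x) 1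
    rw [hx, hi] at this
    simpa using this
  obtain ⟨v, hv⟩ : ∃ v : E, ∀ i, (h i).linear ≠ 0 → (h i).linear v ≠ 0 := by
    obtain ⟨v, hv⟩ := Module.Dual.exists_forall_ne_zero_of_forall_exists
      (fun i : {i : ι // (h i).linear ≠ 0} => ((h i).linear : Module.Dual ℂ E))
      (fun i => by
        by_contra hc
        push Not at hc
        exact i.2 (LinearMap.ext hc))
    exact ⟨v, fun i hi => hv ⟨i, hi⟩⟩
  have hzero : ∀ i x z, h i (x + z • v) = 0 → z = -h i x / (h i).linear v := by
    intro i x z hz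
    by_cases hi : (h i).linear = 0
    · exact absurd hz (hconst i hi _)
    · have hvi := hv i hi
      rw [haff] at hz
      rw [eq_div_iff hvi]
      exact eq_neg_of_add_eq_zero_right hz
  -- choice of the radius
  obtain ⟨ρ, ⟨hρ0, hρr⟩, hρ⟩ : ∃ ρ ∈ Set.Ioo (0 : ℝ) (r / (‖v‖ + 1)),
      ρ ∉ Set.range (fun i => ‖-h i 0 / (h i).linear v‖) :=
    (Set.Ioo_infinite (by positivity)).exists_notMem_finite (Set.finite_range _)
  have hρv : ρ * ‖v‖ < r := by
    rw [lt_div_iff₀ (by positivity)] at hρr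
    nlinarith
  have hcont : ∀ i, Continuous (h i) := fun i => (h i).continuous_of_finiteDimensional
  have hUo : IsOpen U := by
    rw [hU]
    exact Metric.isOpen_ball.sdiff
      (isClosed_iUnion_of_finite fun i => isClosed_eq (hcont i) continuous_const)
  have hUmem : ∀ x, x ∈ U ↔ ‖x‖ < r ∧ ∀ i, h i x ≠ 0 := by
    intro x
    rw [hU]
    simp
  have hcirc : ∀ z ∈ Metric.sphere (0 : ℂ) ρ, z • v ∈ U := by
    intro z hz
    have hz' : ‖z‖ = ρ := by simpa using hz
    rw [hUmem]
    refine ⟨by rw [norm_smul, hz']; exact hρv, fun i hi => hρ ⟨i, ?_⟩⟩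
    have := hzero i 0 z (by simpa using hi)
    simp only
    rw [← this, hz']
  have hnear : ∀ᶠ x in nhds (0 : E), ∀ z ∈ Metric.sphere (0 : ℂ) ρ, x + z • v ∈ U := by
    refine (isCompact_sphere (0 : ℂ) ρ).eventually_forall_of_forall_eventually ?_
    intro z hz
    have hc : Continuous fun q : E × ℂ => q.1 + q.2 • v := by fun_prop
    exact hc.continuousAt.eventually_mem (hUo.mem_nhds (by simpa using hcirc z hz))
  have hnorm : ∀ᶠ x in nhds (0 : E), ‖x‖ + ρ * ‖v‖ < r := by
    have hc : Continuous fun x : E => ‖x‖ + ρ * ‖v‖ := by fun_prop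
    exact hc.continuousAt.eventually_lt continuousAt_const (by simpa using hρv)
  set f' : E → F := fun x => Real.circleAverage (fun z => f (x + z • v)) 0 ρ with hf'
  have hana : AnalyticAt ℂ f' 0 := by
    have h1 := param_analytic (f := f)
      (MeasureTheory.volume.restrict (Set.Icc 0 (2 * Real.pi)))
      (fun θ => circleMap 0 ρ θ • v) (by fun_prop) (Set.Icc 0 (2 * Real.pi))
      (Set.Ioc 0 (2 * Real.pi)) isCompact_Icc measurableSet_Ioc Set.Ioc_subset_Icc_self
      (fun θ _ => hf _ (hcirc _ (circleMap_mem_sphere 0 hρ0.le θ)))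
    have h2 := (analyticAt_const (v := (((2 * Real.pi)⁻¹ : ℝ) : ℂ))).smul h1
    refine h2.congr (Filter.Eventually.of_forall fun x => ?_)
    simp only [hf', Real.circleAverage, Pi.smul_apply', Complex.coe_smul]
    rw [intervalIntegral.integral_of_le (by positivity),
      MeasureTheory.Measure.restrict_restrict measurableSet_Ioc,
      Set.inter_eq_left.2 Set.Ioc_subset_Icc_self]
  refine ⟨{x | AnalyticAt ℂ f' x ∧ (∀ z ∈ Metric.sphere (0 : ℂ) ρ, x + z • v ∈ U) ∧
    ‖x‖ + ρ * ‖v‖ < r}, f', ?_, fun x hx => hx.1, ?_⟩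
  · filter_upwards [hana.eventually_analyticAt, hnear, hnorm] with x h1 h2 h3
    exact ⟨h1, h2, h3⟩
  · rintro x ⟨hxU, -, hxs, hxn⟩
    have hin : ∀ z ∈ Metric.closedBall (0 : ℂ) ρ,
        z ∉ {z : ℂ | ∃ i, h i (x + z • v) = 0} → x + z • v ∈ U := by
      intro z hz hzS
      have hz' : ‖z‖ ≤ ρ := by simpa using hz
      rw [hUmem]
      refine ⟨?_, fun i hi => hzS ⟨i, hi⟩⟩
      calc ‖x + z • v‖ ≤ ‖x‖ + ‖z‖ * ‖v‖ := by
            rw [← norm_smul]; exact norm_add_le _ _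
        _ ≤ ‖x‖ + ρ * ‖v‖ := by gcongr
        _ < r := hxn
    have := mean_value_removable (fun z => f (x + z • v)) {z : ℂ | ∃ i, h i (x + z • v) = 0}
      ((Set.finite_range fun i => -h i x / (h i).linear v).subset
        (by rintro z ⟨i, hi⟩; exact ⟨i, (hzero i x z hi).symm⟩)) ρ C hρ0
      (fun z hz hzS => by
        have h1 := (hf _ (hin z hz hzS)).differentiableAt
        exact h1.comp z (f := fun z : ℂ => x + z • v) (by fun_prop))
      (fun z hz hzS => hbd _ (hin z hz hzS))
      (by
        rintro ⟨i, hi⟩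
        exact ((hUmem x).1 hxU).2 i (by simpa using hi))
      (by
        rintro z hz ⟨i, hi⟩
        exact ((hUmem _).1 (hxs z hz)).2 i hi)
    simpa [hf'] using this.symm
end

section
/- Let E be a finite-dimensional complex vector space and f a bounded holomorphic function on the complement of the zero set of an affine function l (with l(0)=0) in a neighborhood of 0, such that l·f extends holomorphically to a neighborhood of 0 as a function g. Then g vanishes on the hyperplane {l=0} near 0, and f extends holomorphically to a neighborhood of 0. -/
theorem telescoping_aux {E F : Type*} [NormedAddCommGroup E] [NormedSpace ℂ E]
    [NormedAddCommGroup F] [NormedSpace ℂ F] (n : ℕ)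
    (m : ContinuousMultilinearMap ℂ (fun _ : Fin (n + 1) => E) F) (x y e : E) (c : ℂ)
    (h : x - y = c • e) :
    m (fun _ => x) - m (fun _ => y) =
      c • ∑ i : Fin (n + 1), m (i.insertNth e (fun j => if j.castSucc < i then y else x)) := by
  have key : ∀ i : Fin (n + 1),
      c • m (i.insertNth e (fun j => if j.castSucc < i then y else x)) =
      m (fun j => if (j : ℕ) < (i : ℕ) then y else x) -
        m (fun j => if (j : ℕ) < (i : ℕ) + 1 then y else x) := by
    intro i
    have e1 : ∀ z : E, (i.insertNth z (fun j => if j.castSucc < i then y else x) :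
        Fin (n + 1) → E) =
        Function.update (fun j : Fin (n + 1) => if (j : ℕ) < (i : ℕ) then y else x) i z := by
      intro z
      funext j
      refine Fin.succAboveCases i ?_ ?_ j
      · simp
      · intro k
        simp only [Fin.insertNth_apply_succAbove, ne_eq, Fin.succAbove_ne, not_false_eq_true,
          Function.update_of_ne]
        rcases lt_or_ge k.castSucc i with hk | hk
        · rw [Fin.succAbove_of_castSucc_lt _ _ hk]
          have hk' : (k : ℕ) < i := hk
          rw [if_pos hk, if_pos (by simpa using hk')]
        · rw [Fin.succAbove_of_le_castSucc _ _ hk]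
          have hk' : (i : ℕ) ≤ k := hk
          rw [if_neg (not_lt.2 hk), if_neg (by simp only [Fin.val_succ]; omega)]
    rw [e1, ← m.map_update_smul, ← h, m.map_update_sub]
    congr 2
    · funext j
      by_cases hj : j = i
      · subst hj; simp
      · simp [hj]
    · funext j
      by_cases hj : j = i
      · subst hj; simp
      · have : (j : ℕ) ≠ i := fun h => hj (Fin.ext h)
        simp only [ne_eq, hj, not_false_eq_true, Function.update_of_ne]
        congr 1
        apply propext
        omega
  rw [Finset.smul_sum, Finset.sum_congr rfl (fun i _ => key i)]
  rw [Fin.sum_univ_eq_sum_range (fun i => m (fun j => if (j : ℕ) < i then y else x) -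
        m (fun j => if (j : ℕ) < i + 1 then y else x)), Finset.sum_range_sub']
  congr 2
  funext j
  rw [if_pos j.isLt]

theorem divided_difference_aux {E F : Type*} [NormedAddCommGroup E] [NormedSpace ℂ E]
    [NormedAddCommGroup F] [NormedSpace ℂ F] [CompleteSpace F]
    (L : E →L[ℂ] ℂ) (P : E →L[ℂ] E) (e : E) (hP : ∀ x, x - P x = L x • e)
    (g : E → F) (hg : AnalyticAt ℂ g 0) :
    ∃ G : E → F, AnalyticAt ℂ G 0 ∧ ∀ᶠ x in nhds (0 : E), g x - g (P x) = L x • G x := by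
  obtain ⟨p, R, hp⟩ := hg
  let q : FormalMultilinearSeries ℂ E F := fun n =>
    ∑ i : Fin (n + 1), (ContinuousMultilinearMap.curryMid i (p (n + 1)) e).compContinuousLinearMap
      (fun j => if j.castSucc < i then P else ContinuousLinearMap.id ℂ E)
  have hq : ∀ n x, (p (n + 1)) (fun _ => x) - (p (n + 1)) (fun _ => P x) =
      L x • q n (fun _ => x) := by
    intro n x
    rw [telescoping_aux n (p (n + 1)) x (P x) e (L x) (hP x)]
    congr 1
    simp only [q, sum_apply,
      ContinuousMultilinearMap.compContinuousLinearMap_apply,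
      ContinuousMultilinearMap.curryMid_apply]
    refine Finset.sum_congr rfl fun i _ => ?_
    congr 2
    funext j
    split_ifs <;> simp
  obtain ⟨C, a, hC, ha, hpa⟩ := p.le_mul_pow_of_radius_pos hp.radius_pos
  set K : ℝ := max 1 ‖P‖ with hK
  have hK1 : 1 ≤ K := le_max_left _ _
  have hqn : ∀ n, ‖q n‖ ≤ (n + 1) * ((C * a ^ (n + 1)) * ‖e‖ * K ^ n) := by
    intro n
    refine (norm_sum_le _ _).trans ?_
    refine (Finset.sum_le_card_nsmul _ _ ((C * a ^ (n + 1)) * ‖e‖ * K ^ n) ?_).trans ?_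
    · intro i _
      refine (ContinuousMultilinearMap.norm_compContinuousLinearMap_le _ _).trans ?_
      gcongr
      · refine (ContinuousLinearMap.le_opNorm _ _).trans ?_
        rw [ContinuousMultilinearMap.norm_curryMid]
        gcongr
        exact hpa (n + 1)
      · refine (Finset.prod_le_prod (g := fun _ => K) (fun _ _ => norm_nonneg _) ?_).trans ?_
        · intro j _
          split_ifs
          · exact le_max_right _ _
          · exact ContinuousLinearMap.norm_id_le.trans hK1
        · simp
    · simp
  have hqr : 0 < q.radius := by
    let ρ : NNReal := ⟨(2 * a * K)⁻¹, by positivity⟩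
    have hρ : 0 < ρ := by
      have : 0 < (2 * a * K)⁻¹ := by positivity
      exact this
    refine lt_of_lt_of_le (ENNReal.coe_pos.2 hρ) (q.le_radius_of_bound (C * a * ‖e‖) fun n => ?_)
    have h2 : (n + 1 : ℝ) ≤ 2 ^ n := by exact_mod_cast Nat.lt_two_pow_self
    calc ‖q n‖ * (ρ : ℝ) ^ n
        ≤ (2 ^ n * ((C * a ^ (n + 1)) * ‖e‖ * K ^ n)) * ((2 * a * K)⁻¹) ^ n := by
          refine mul_le_mul_of_nonneg_right ((hqn n).trans ?_) (by positivity)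
          gcongr
      _ = C * a * ‖e‖ := by
          rw [inv_pow, mul_pow, mul_pow, pow_succ]
          field_simp
  have hQ := q.hasFPowerSeriesOnBall hqr
  refine ⟨q.sum, hQ.analyticAt, ?_⟩
  have b1 : ∀ᶠ x in nhds (0 : E), x ∈ Metric.eball (0 : E) R :=
    Metric.eball_mem_nhds _ hp.r_pos
  have b2 : ∀ᶠ x in nhds (0 : E), P x ∈ Metric.eball (0 : E) R := by
    have : Filter.Tendsto P (nhds 0) (nhds 0) := by
      simpa using P.continuous.tendsto 0
    exact this b1
  have b3 : ∀ᶠ x in nhds (0 : E), x ∈ Metric.eball (0 : E) q.radius :=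
    Metric.eball_mem_nhds _ hqr
  filter_upwards [b1, b2, b3] with x h1 h2 h3
  have s1 := (hp.hasSum h1).sub (hp.hasSum h2)
  have s2 := (hQ.hasSum h3).const_smul (L x)
  simp only [zero_add] at s1 s2
  rw [← hasSum_nat_add_iff' 1] at s1
  simp only [hq] at s1
  have := s1.unique s2
  have h0 : (p 0) (fun _ => x) = (p 0) (fun _ => P x) := by
    congr 1
    exact Subsingleton.elim _ _
  simpa [h0] using this

/-- One-hyperplane removable singularity: if `f` is bounded and holomorphic on the
complement of the zero set of an affine function `l` (with `l 0 = 0`) in a ball around `0`,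
and `l • f` extends to a holomorphic function `g` on the ball, then `g` vanishes on the
hyperplane `{l = 0}` near `0` and `f` extends holomorphically to a neighborhood of `0`. -/
theorem stmt1 {E F : Type*} [NormedAddCommGroup E] [NormedSpace ℂ E] [FiniteDimensional ℂ E]
    [NormedAddCommGroup F] [NormedSpace ℂ F] [FiniteDimensional ℂ F]
    {r : ℝ} (hr : 0 < r) (l : E →ᵃ[ℂ] ℂ) (hl0 : l 0 = 0) (hl : l ≠ 0)
    (U : Set E) (hU : U = {x ∈ Metric.ball (0 : E) r | l x ≠ 0})
    (f : E → F) (hf : AnalyticOnNhd ℂ f U)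
    (C : ℝ) (hbd : ∀ x ∈ U, ‖f x‖ ≤ C)
    (g : E → F) (hg : AnalyticOnNhd ℂ g (Metric.ball 0 r))
    (hgf : ∀ x ∈ U, g x = (l x) • f x) :
    ∃ V ∈ nhds (0 : E), (∀ x ∈ V, l x = 0 → g x = 0) ∧
      ∃ f' : E → F, AnalyticOnNhd ℂ f' V ∧ Set.EqOn f f' (U ∩ V) := by
  obtain ⟨e, he⟩ : ∃ e, l e = 1 := by
    obtain ⟨v, hv⟩ : ∃ v, l v ≠ 0 := by
      by_contra! h
      exact hl (by ext x; simpa using h x)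
    refine ⟨(l v)⁻¹ • v, ?_⟩
    have h1 : ∀ x, l x = l.linear x := fun x => by
      have := l.map_vadd 0 x
      simpa [hl0] using this
    rw [h1, map_smul, ← h1]
    simp [hv]
  have hlin : ∀ x, l x = l.linear x := fun x => by
    have := l.map_vadd 0 x
    simpa [hl0] using this
  let L : E →L[ℂ] ℂ := LinearMap.toContinuousLinearMap l.linear
  have hL : ∀ x, L x = l x := fun x => by simp [L, hlin]
  let P : E →L[ℂ] E := ContinuousLinearMap.id ℂ E - L.smulRight e
  have hP : ∀ x, x - P x = L x • e := fun x => by simp [P]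
  have hLP : ∀ x, l (P x) = 0 := fun x => by
    rw [← hL]
    change L (x - L x • e) = 0
    rw [map_sub, map_smul, hL e, he]
    simp
  haveI : CompleteSpace F := FiniteDimensional.complete ℂ F
  have hvan : ∀ x ∈ Metric.ball (0 : E) r, l x = 0 → g x = 0 := by
    intro x hx hlx
    have hc : Filter.Tendsto (fun t : ℂ => x + t • e) (nhdsWithin 0 {0}ᶜ) (nhds x) := by
      have : Continuous (fun t : ℂ => x + t • e) := by fun_prop
      have := this.tendsto 0
      simp only [zero_smul, add_zero] at this
      exact this.mono_left nhdsWithin_le_nhds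
    have t1 := (hg x hx).continuousAt.tendsto.comp hc
    have hb : ∀ᶠ t : ℂ in nhdsWithin 0 {0}ᶜ, ‖g (x + t • e)‖ ≤ ‖t‖ * C := by
      filter_upwards [hc (Metric.isOpen_ball.mem_nhds hx), self_mem_nhdsWithin] with t h1 h2
      have hlt : l (x + t • e) = t := by
        rw [← hL, map_add, map_smul, hL, hL, hlx, he]; simp
      have hU' : x + t • e ∈ U := by
        rw [hU]
        exact ⟨h1, by rw [hlt]; exact h2⟩
      rw [hgf _ hU', hlt, norm_smul]
      exact mul_le_mul_of_nonneg_left (hbd _ hU') (norm_nonneg _)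
    have t2 : Filter.Tendsto (fun t : ℂ => ‖t‖ * C) (nhdsWithin 0 {0}ᶜ) (nhds 0) := by
      have : Continuous (fun t : ℂ => ‖t‖ * C) := by fun_prop
      have := this.tendsto 0
      simp only [norm_zero, zero_mul] at this
      exact this.mono_left nhdsWithin_le_nhds
    exact tendsto_nhds_unique t1 (squeeze_zero_norm' hb t2)
  obtain ⟨G, hG, hGe⟩ := divided_difference_aux L P e hP g (hg 0 (Metric.mem_ball_self hr))
  have b2 : ∀ᶠ x in nhds (0 : E), P x ∈ Metric.ball (0 : E) r := by
    have : Filter.Tendsto P (nhds 0) (nhds 0) := by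
      simpa using P.continuous.tendsto 0
    exact this (Metric.ball_mem_nhds _ hr)
  have hall := (hG.eventually_analyticAt.and hGe).and (b2.and (Metric.ball_mem_nhds (0 : E) hr))
  refine ⟨_, hall, fun x hx hlx => hvan x hx.2.2 hlx, G, fun x hx => hx.1.1, ?_⟩
  rintro x ⟨hxU, hx⟩
  have h1 := hx.1.2
  have hlx : l x ≠ 0 := by
    rw [hU] at hxU
    exact hxU.2
  rw [hvan _ hx.2.1 (hLP x), sub_zero, hgf x hxU, hL] at h1
  exact smul_right_injective F hlx h1
end
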